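/- Fix τ ∈ ℍ, z ∈ ℂ, and a ∈ ℂ, with z ∉ ℤ+τℤ, 2z ∉ ℤ+τℤ, and (a+1)z ∉ ℤ+τℤ. Let F₂(t) = [θ(t+z)θ'(0)/(θ(t)θ(z))]² · [θ(t−z)θ'(0)/(θ(t)θ(−z))] · [θ(−t+2z)θ(z)/(θ(−t+z)θ(2z))] · [θ(t+(a+1)z)θ(z)/(θ(t+z)θ((a+1)z))] · [θ(t−(a+1)z)θ(z)/(θ(t−z)θ((a+1)z))]. Then for all sufficiently small r > 0, the residue of F₂ at t = 0, namely (1/(2πi)) times the integral of F₂ over the positively oriented circle of radius r centered at 0, equals θ((a+2)z)θ(az)/θ((a+1)z)² · (θ'(0)/θ(z))². -/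

import Mathlib

/-!
Put `w = (a + 1) z`. Cancelling common theta factors shows that near `0` the function `F₂` equals

  `redF(t) = -θ'(0)³ / (θ(2z) θ(w)²) · θ(t+z) θ(t-2z) θ(t+w) θ(t-w) / (θ(t)³ θ(t-z))`,

which is elliptic: the numerator and the denominator have four theta factors each, and the zeros
and the poles have equal sums, so the factors of automorphy cancel (`redF_add_one`,
`redF_add_tau`). Modulo the lattice, its poles are at most a triple pole at `0` and a simple pole
at `z`, and the residue at `z` is read off by evaluating the remaining factors there. Hence the
claim follows once the residues of an elliptic function are known to add up to zero.

That fact (`residue_add_residue_eq_zero`) is proved without a contour integral over a period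
parallelogram. The principal parts are removed by subtracting combinations of `θ'/θ`, its first two
derivatives, and its translate by `z`. The difference has only removable singularities, so it
extends to an entire function `F` (`exists_entire_extension`). Since `θ'/θ` is `1`-periodic and
changes by `-2πi` under `t ↦ t + τ`, the function `F` is `1`-periodic and
`F(t + τ) = F(t) + 2πi · (sum of residues)`. By Liouville's theorem `F'` is constant, so `F` is
affine, hence constant by `1`-periodicity, and the sum of residues vanishes
(`shift_const_eq_zero`).

Finally, the residue at `0` is the coefficient of `t⁻¹` in the Laurent expansion, and
`circleIntegral_laurent` identifies it with the integral over a small circle.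
-/

open Complex Topology Filter

/-- `q = e^{2πiτ}`. -/
noncomputable def jq (τ : ℂ) : ℂ := Complex.exp (2 * Real.pi * I * τ)

/-- The Jacobi theta function
`θ(t,τ) = q^{1/8} · 2 sin(πt) · ∏_{n≥1}(1−qⁿ) · ∏_{n≥1}(1−qⁿe^{2πit})(1−qⁿe^{−2πit})`,
where `q^{1/8} = e^{πiτ/4}`. -/
noncomputable def jTheta (t τ : ℂ) : ℂ :=
  Complex.exp (Real.pi * I * τ / 4) * (2 * Complex.sin (Real.pi * t)) *
    (∏' n : ℕ, (1 - jq τ ^ (n + 1))) *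
    (∏' n : ℕ, (1 - jq τ ^ (n + 1) * Complex.exp (2 * Real.pi * I * t)) *
      (1 - jq τ ^ (n + 1) * Complex.exp (-(2 * Real.pi * I * t))))

/-- `θ(t)` with `τ` fixed. -/
noncomputable def th (τ t : ℂ) : ℂ := jTheta t τ

/-- `θ'(0)`, the derivative of `θ(·,τ)` at `t = 0`. -/
noncomputable def thd (τ : ℂ) : ℂ := deriv (fun t => jTheta t τ) 0

/-- Membership in the lattice `ℤ + τℤ`. -/
def inLat (τ t : ℂ) : Prop := ∃ m n : ℤ, t = (m : ℂ) + (n : ℂ) * τ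

/-- The function `F₂` arising in Case 2 of the proof of birational invariance:
`F₂(t) = [θ(t+z)θ'(0)/(θ(t)θ(z))]²·[θ(t−z)θ'(0)/(θ(t)θ(−z))]·
[θ(−t+2z)θ(z)/(θ(−t+z)θ(2z))]·[θ(t+(a+1)z)θ(z)/(θ(t+z)θ((a+1)z))]·
[θ(t−(a+1)z)θ(z)/(θ(t−z)θ((a+1)z))]`. -/
noncomputable def F₂ (τ z a t : ℂ) : ℂ :=
  (th τ (t + z) * thd τ / (th τ t * th τ z)) ^ 2 *
  (th τ (t - z) * thd τ / (th τ t * th τ (-z))) *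
  (th τ (-t + 2 * z) * th τ z / (th τ (-t + z) * th τ (2 * z))) *
  (th τ (t + (a + 1) * z) * th τ z / (th τ (t + z) * th τ ((a + 1) * z))) *
  (th τ (t - (a + 1) * z) * th τ z / (th τ (t - z) * th τ ((a + 1) * z)))

/-! ### Theta function -/

/-- The Euler product `∏_{n ≥ 1} (1 - qⁿ x)`. -/
noncomputable def eulerProd (q x : ℂ) : ℂ := ∏' n : ℕ, (1 - q ^ (n + 1) * x)

lemma norm_jq_lt_one {τ : ℂ} (hτ : 0 < τ.im) : ‖jq τ‖ < 1 := by
  have := UpperHalfPlane.norm_exp_two_pi_I_lt_one ⟨τ, hτ⟩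
  simpa [jq] using this

lemma jq_ne_zero (τ : ℂ) : jq τ ≠ 0 := Complex.exp_ne_zero _

lemma summable_norm_pow_mul {q : ℂ} (hq : ‖q‖ < 1) (x : ℂ) :
    Summable fun n : ℕ => ‖-(q ^ (n + 1) * x)‖ := by
  simpa using ((summable_nat_add_iff 1).mpr
    (summable_geometric_of_lt_one (norm_nonneg _) hq)).mul_right ‖x‖

lemma multipliable_eulerProd {q : ℂ} (hq : ‖q‖ < 1) (x : ℂ) :
    Multipliable fun n : ℕ => (1 - q ^ (n + 1) * x) := by
  simpa [sub_eq_add_neg] using multipliable_one_add_of_summable (summable_norm_pow_mul hq x)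

lemma eulerProd_ne_zero {q : ℂ} (hq : ‖q‖ < 1) {x : ℂ} (hx : ∀ n : ℕ, q ^ (n + 1) * x ≠ 1) :
    eulerProd q x ≠ 0 := by
  have := tprod_one_add_ne_zero_of_summable (f := fun n : ℕ => -(q ^ (n + 1) * x))
    (fun n h => hx n (by linear_combination -h)) (summable_norm_pow_mul hq x)
  simpa [eulerProd, sub_eq_add_neg] using this

lemma eulerProd_eq_mul {q : ℂ} (hq : ‖q‖ < 1) (x : ℂ) :
    eulerProd q x = (1 - q * x) * eulerProd q (q * x) := by
  have e : ∀ n : ℕ, 1 - q ^ (n + 1 + 1) * x = 1 - q ^ (n + 1) * (q * x) := fun n => by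
    rw [pow_succ, mul_assoc]
  have h : Multipliable fun n : ℕ => (1 - q ^ (n + 1 + 1) * x) := by
    simp only [e]
    exact multipliable_eulerProd hq (q * x)
  have := tprod_eq_zero_mul' (f := fun n : ℕ => 1 - q ^ (n + 1) * x) h
  simp only [e, zero_add, pow_one] at this
  exact this

lemma differentiable_eulerProd {q : ℂ} (hq : ‖q‖ < 1) : Differentiable ℂ (eulerProd q) := by
  intro x
  have hO : IsOpen (Metric.ball (0 : ℂ) (‖x‖ + 1)) := Metric.isOpen_ball
  have hs : Summable fun n : ℕ => ‖q‖ ^ (n + 1) * (‖x‖ + 1) :=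
    ((summable_nat_add_iff 1).mpr
      (summable_geometric_of_lt_one (norm_nonneg _) hq)).mul_right _
  have hP := hs.hasProdLocallyUniformlyOn_nat_one_add
    (f := fun n y => -(q ^ (n + 1) * y)) hO
    (.of_forall fun n y hy => by
      have : ‖y‖ < ‖x‖ + 1 := by simpa using hy
      simp only [norm_neg, norm_mul, norm_pow]
      gcongr) (fun n => by fun_prop)
  have hD := hP.differentiableOn
    (.of_forall fun _ => by simpa [Finset.prod_fn] using
      DifferentiableOn.finsetProd (fun _ _ => by fun_prop)) hO
  have := hD.differentiableAt (hO.mem_nhds (by simp : x ∈ Metric.ball (0 : ℂ) (‖x‖ + 1)))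
  refine this.congr_of_eventuallyEq (.of_forall fun y => ?_)
  simp [eulerProd, sub_eq_add_neg]

/-- The theta function as a product of two Euler products. Splitting the paired product requires
convergence of each factor, hence `0 < τ.im`. -/
lemma th_eq {τ : ℂ} (hτ : 0 < τ.im) (t : ℂ) :
    th τ t = exp (Real.pi * I * τ / 4) * (2 * sin (Real.pi * t)) * eulerProd (jq τ) 1 *
      (eulerProd (jq τ) (exp (2 * Real.pi * I * t)) *
        eulerProd (jq τ) (exp (-(2 * Real.pi * I * t)))) := by
  have hq := norm_jq_lt_one hτ
  unfold th jTheta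
  rw [(multipliable_eulerProd hq _).tprod_mul (multipliable_eulerProd hq _)]
  simp [eulerProd]

lemma th_differentiable {τ : ℂ} (hτ : 0 < τ.im) : Differentiable ℂ (th τ) := by
  have h := differentiable_eulerProd (norm_jq_lt_one hτ)
  rw [show th τ = _ from funext (th_eq hτ)]
  fun_prop

lemma th_neg (τ t : ℂ) : th τ (-t) = -th τ t := by
  simp only [th, jTheta, mul_neg, Complex.sin_neg, neg_neg, neg_mul]
  congr 2
  exact tprod_congr fun n => mul_comm _ _

lemma th_add_one (τ t : ℂ) : th τ (t + 1) = -th τ t := by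
  have h1 : exp (2 * Real.pi * I * (t + 1)) = exp (2 * Real.pi * I * t) := by
    rw [mul_add, mul_one, Complex.exp_add, Complex.exp_two_pi_mul_I, mul_one]
  have h2 : exp (-(2 * Real.pi * I * (t + 1))) = exp (-(2 * Real.pi * I * t)) := by
    rw [Complex.exp_neg, h1, Complex.exp_neg]
  have h3 : sin (Real.pi * (t + 1)) = -sin (Real.pi * t) := by
    rw [mul_add, mul_one, Complex.sin_add_pi]
  simp only [th, jTheta, h1, h2, h3]
  ring

/-- Quasi-periodicity `θ(t + τ) = -e^{-πiτ} e^{-2πit} θ(t)`. -/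
lemma th_add_tau {τ : ℂ} (hτ : 0 < τ.im) (t : ℂ) :
    th τ (t + τ) = -exp (-(Real.pi * I * τ)) * exp (-(2 * Real.pi * I * t)) * th τ t := by
  have hq := norm_jq_lt_one hτ
  rw [th_eq hτ, th_eq hτ]
  set q := jq τ with hqdef
  set x := exp (2 * Real.pi * I * t) with hx
  set y := exp (-(2 * Real.pi * I * t)) with hy
  have e1 : exp (2 * Real.pi * I * (t + τ)) = q * x := by
    rw [hqdef, hx, jq, ← Complex.exp_add]; ring_nf
  have e2 : q * exp (-(2 * Real.pi * I * (t + τ))) = y := by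
    rw [hqdef, hy, jq, ← Complex.exp_add]; ring_nf
  have key1 := eulerProd_eq_mul hq x
  have key2 := eulerProd_eq_mul hq (exp (-(2 * Real.pi * I * (t + τ))))
  rw [e2] at key2
  rw [e1, key2, key1]
  set u := exp (Real.pi * I * t) with hu
  set v := exp (Real.pi * I * τ) with hv
  have hu0 : u ≠ 0 := Complex.exp_ne_zero _
  have hv0 : v ≠ 0 := Complex.exp_ne_zero _
  have hxu : x = u ^ 2 := by rw [hx, hu, ← Complex.exp_nat_mul]; ring_nf
  have hyu : y = (u ^ 2)⁻¹ := by rw [hy, Complex.exp_neg, ← hx, hxu]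
  have hqv : q = v ^ 2 := by rw [hqdef, hv, jq, ← Complex.exp_nat_mul]; ring_nf
  have s1 : sin (Real.pi * t) = (u⁻¹ - u) * I / 2 := by
    rw [Complex.sin, hu, ← Complex.exp_neg]; ring_nf
  have s2 : sin (Real.pi * (t + τ)) = ((u * v)⁻¹ - u * v) * I / 2 := by
    rw [Complex.sin, hu, hv, ← Complex.exp_add, ← Complex.exp_neg]; ring_nf
  have hvn : exp (-(Real.pi * I * τ)) = v⁻¹ := by rw [Complex.exp_neg]
  rw [s1, s2, hvn, hyu, hxu, hqv]
  field_simp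
  ring

lemma inLat_of_exp_eq_one {τ t : ℂ} {n : ℤ} (h : exp (2 * Real.pi * I * (t + n * τ)) = 1) :
    inLat τ t := by
  obtain ⟨m, hm⟩ := Complex.exp_eq_one_iff.mp h
  refine ⟨m, -n, ?_⟩
  have h0 := Complex.two_pi_I_ne_zero
  have : t + n * τ = m := mul_left_cancel₀ h0 (by rw [hm]; ring)
  push_cast
  linear_combination this

lemma inLat_neg {τ t : ℂ} (h : inLat τ (-t)) : inLat τ t := by
  obtain ⟨m, n, h⟩ := h
  exact ⟨-m, -n, by push_cast; linear_combination -h⟩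

lemma jq_pow_mul_exp (τ t : ℂ) (n : ℕ) : jq τ ^ (n + 1) * exp (2 * Real.pi * I * t) =
    exp (2 * Real.pi * I * (t + ((n + 1 : ℕ) : ℤ) * τ)) := by
  rw [jq, ← Complex.exp_nat_mul, ← Complex.exp_add]
  push_cast
  ring_nf

lemma eulerProd_exp_ne_zero {τ t : ℂ} (hτ : 0 < τ.im)
    (h : ∀ n : ℕ, exp (2 * Real.pi * I * (t + ((n + 1 : ℕ) : ℤ) * τ)) ≠ 1) :
    eulerProd (jq τ) (exp (2 * Real.pi * I * t)) ≠ 0 :=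
  eulerProd_ne_zero (norm_jq_lt_one hτ) fun n => by rw [jq_pow_mul_exp]; exact h n

lemma eulerProd_one_ne_zero {τ : ℂ} (hτ : 0 < τ.im) : eulerProd (jq τ) 1 ≠ 0 := by
  refine eulerProd_ne_zero (norm_jq_lt_one hτ) fun n h => ?_
  have h1 : ‖jq τ‖ ^ (n + 1) = 1 := by simpa using congrArg norm h
  exact (pow_lt_one₀ (norm_nonneg _) (norm_jq_lt_one hτ) n.succ_ne_zero).ne h1

/-- The zeros of `θ` lie in the lattice. -/
lemma th_ne_zero {τ t : ℂ} (hτ : 0 < τ.im) (ht : ¬ inLat τ t) : th τ t ≠ 0 := by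
  rw [th_eq hτ]
  have h1 := eulerProd_exp_ne_zero hτ (t := t) fun n h => ht (inLat_of_exp_eq_one h)
  have h2 := eulerProd_exp_ne_zero hτ (t := -t) fun n h =>
    ht (inLat_neg (inLat_of_exp_eq_one h))
  rw [mul_neg] at h2
  have h3 : sin (Real.pi * t) ≠ 0 := fun h => by
    obtain ⟨k, hk⟩ := Complex.sin_eq_zero_iff.mp h
    refine ht ⟨k, 0, ?_⟩
    have : (Real.pi : ℂ) ≠ 0 := by exact_mod_cast Real.pi_ne_zero
    have : t = k := mul_left_cancel₀ this (by rw [hk]; ring)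
    simpa using this
  have := eulerProd_one_ne_zero hτ
  have := Complex.exp_ne_zero (Real.pi * I * τ / 4)
  simp_all

lemma th_zero (τ : ℂ) : th τ 0 = 0 := by simp [th, jTheta]

lemma thd_eq_deriv (τ : ℂ) : thd τ = deriv (th τ) 0 := rfl

/-- The zero of `θ` at the origin is simple. -/
lemma thd_ne_zero {τ : ℂ} (hτ : 0 < τ.im) : thd τ ≠ 0 := by
  have hE := differentiable_eulerProd (norm_jq_lt_one hτ)
  have hs : HasDerivAt (fun t : ℂ => sin (Real.pi * t)) Real.pi 0 := by
    simpa using ((hasDerivAt_id (0 : ℂ)).const_mul (Real.pi : ℂ)).csin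
  have hg : Differentiable ℂ fun t => eulerProd (jq τ) (exp (2 * Real.pi * I * t)) *
        eulerProd (jq τ) (exp (-(2 * Real.pi * I * t))) := by fun_prop
  have h := (((hs.const_mul 2).const_mul (exp (Real.pi * I * τ / 4))).mul_const
    (eulerProd (jq τ) 1)).mul (hg 0).hasDerivAt
  rw [thd_eq_deriv, show th τ = _ from funext (th_eq hτ)]
  refine ne_of_eq_of_ne h.deriv ?_
  have := eulerProd_one_ne_zero hτ
  have := Complex.exp_ne_zero (Real.pi * I * τ / 4)
  have : (Real.pi : ℂ) ≠ 0 := by exact_mod_cast Real.pi_ne_zero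
  simp_all

/-! ### Removable singularities and Liouville's theorem -/

/-- `f` has a removable singularity at `p`: near `p`, and away from `p` itself, it agrees with a
function analytic at `p`. -/
def RemovableAt (f : ℂ → ℂ) (p : ℂ) : Prop :=
  ∃ g : ℂ → ℂ, AnalyticAt ℂ g p ∧ f =ᶠ[𝓝[≠] p] g

lemma tendsto_add_nhdsNE (p w : ℂ) : Tendsto (fun t => t + w) (𝓝[≠] p) (𝓝[≠] (p + w)) := by
  refine tendsto_nhdsWithin_iff.mpr ⟨?_, ?_⟩
  · exact (Continuous.tendsto (by fun_prop : Continuous fun t : ℂ => t + w) p).mono_left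
      nhdsWithin_le_nhds
  · filter_upwards [self_mem_nhdsWithin] with t ht
    simpa using ht

lemma AnalyticAt.removableAt {f : ℂ → ℂ} {p : ℂ} (h : AnalyticAt ℂ f p) : RemovableAt f p :=
  ⟨f, h, EventuallyEq.rfl⟩

lemma RemovableAt.congr {f g : ℂ → ℂ} {p : ℂ} (h : RemovableAt f p) (hfg : g =ᶠ[𝓝[≠] p] f) :
    RemovableAt g p := by
  obtain ⟨k, hk, hf⟩ := h
  exact ⟨k, hk, hfg.trans hf⟩

lemma RemovableAt.of_shift {f : ℂ → ℂ} {p w c : ℂ} (h : RemovableAt f (p + w))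
    (hf : ∀ᶠ t in 𝓝[≠] p, f (t + w) = f t + c) : RemovableAt f p := by
  obtain ⟨g, hg, hfg⟩ := h
  refine ⟨fun t => g (t + w) - c, ?_, ?_⟩
  · exact (AnalyticAt.fun_comp_of_eq hg (by fun_prop : AnalyticAt ℂ (fun t : ℂ => t + w) p) rfl).sub
      analyticAt_const
  · filter_upwards [hf, (tendsto_add_nhdsNE p w).eventually hfg] with t h1 h2
    rw [← h2, h1]; ring

lemma eventually_shift_neg {f : ℂ → ℂ} {w c : ℂ}
    (hf : ∀ p, ∀ᶠ t in 𝓝[≠] p, f (t + w) = f t + c) (p : ℂ) :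
    ∀ᶠ t in 𝓝[≠] p, f (t + -w) = f t + -c := by
  filter_upwards [(tendsto_add_nhdsNE p (-w)).eventually (hf (p + -w))] with t ht
  rw [neg_add_cancel_right] at ht
  rw [ht]; ring

lemma RemovableAt.add_int_mul {f : ℂ → ℂ} {w c : ℂ}
    (hf : ∀ p, ∀ᶠ t in 𝓝[≠] p, f (t + w) = f t + c) (n : ℤ) {p : ℂ} (h : RemovableAt f p) :
    RemovableAt f (p + n * w) := by
  induction n using Int.induction_on with
  | zero => simpa using h
  | succ k ih =>
    refine RemovableAt.of_shift (w := -w) ?_ (eventually_shift_neg hf _)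
    convert ih using 1; push_cast; ring
  | pred k ih =>
    refine RemovableAt.of_shift (w := w) ?_ (hf _)
    convert ih using 1; push_cast; ring

/-- A function with only removable singularities extends to an entire function. -/
lemma exists_entire_extension {f : ℂ → ℂ} (h : ∀ p, RemovableAt f p) :
    ∃ F : ℂ → ℂ, Differentiable ℂ F ∧ ∀ p, f =ᶠ[𝓝[≠] p] F := by
  choose g hg hfg using h
  have key : ∀ p, ∀ᶠ q in 𝓝 p, g q q = g p q := by
    intro p
    have h1 : ∀ᶠ q in 𝓝[≠] p, g q q = g p q := by
      filter_upwards [eventually_nhdsNE_eventually_nhds_iff.mpr (hfg p),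
        eventually_nhdsWithin_of_eventually_nhds (hg p).eventually_analyticAt] with q hq hgq
      have : g q =ᶠ[𝓝[≠] q] g p :=
        (hfg q).symm.trans (eventually_nhdsWithin_of_eventually_nhds hq)
      exact (((hg q).continuousAt.eventuallyEq_nhds_iff_eventuallyEq_nhdsNE
        hgq.continuousAt).mp this).self_of_nhds
    rw [eventually_nhdsWithin_iff] at h1
    filter_upwards [h1] with q hq
    by_cases hqp : q = p
    · rw [hqp]
    · exact hq hqp
  refine ⟨fun p => g p p, fun p => ?_, fun p => ?_⟩
  · exact (hg p).differentiableAt.congr_of_eventuallyEq (key p)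
  · filter_upwards [hfg p, eventually_nhdsWithin_of_eventually_nhds (key p)] with q h1 h2
    rw [h1, h2]

lemma shift_of_eventually_shift {f F : ℂ → ℂ} {w c : ℂ} (hF : Differentiable ℂ F)
    (hfF : ∀ p, f =ᶠ[𝓝[≠] p] F)
    (hf : ∀ p, ∀ᶠ t in 𝓝[≠] p, f (t + w) = f t + c) (p : ℂ) : F (p + w) = F p + c := by
  have hc := hF.continuous
  have : (fun t => F (t + w)) =ᶠ[𝓝[≠] p] fun t => F t + c := by
    filter_upwards [hf p, hfF p, (tendsto_add_nhdsNE p w).eventually (hfF (p + w))] with t h1 h2 h3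
    rw [← h3, h1, h2]
  exact ((ContinuousAt.eventuallyEq_nhds_iff_eventuallyEq_nhdsNE
    (by fun_prop) (by fun_prop)).mp this).self_of_nhds

lemma periodic_int_mul {F : ℂ → ℂ} {w : ℂ} (h : Function.Periodic F w) (n : ℤ) (p : ℂ) :
    F (p + n * w) = F p := h.int_mul n p

/-- Liouville for elliptic functions: an entire function with periods `1` and `τ` is constant. -/
lemma apply_eq_of_periodic {τ : ℂ} (hτ : 0 < τ.im) {F : ℂ → ℂ} (hF : Differentiable ℂ F)
    (h1 : ∀ t, F (t + 1) = F t) (h2 : ∀ t, F (t + τ) = F t) (s t : ℂ) : F s = F t := by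
  refine hF.apply_eq_apply_of_bounded ?_ s t
  let P : ℝ × ℝ → ℂ := fun x => F (x.1 + x.2 * τ)
  have hP : Continuous P := by
    have := hF.continuous
    fun_prop
  refine ((isCompact_Icc (a := (0 : ℝ)) (b := 1)).prod (isCompact_Icc (a := (0 : ℝ)) (b := 1))
    |>.image hP).isBounded.subset ?_
  rintro _ ⟨t, rfl⟩
  let y : ℝ := t.im / τ.im
  let x : ℝ := t.re - y * τ.re
  have ht : t = x + y * τ := by
    apply Complex.ext
    · simp [x]
    · simp [y, hτ.ne']
  refine ⟨(Int.fract x, Int.fract y), ⟨?_, ?_⟩, ?_⟩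
  · exact ⟨Int.fract_nonneg _, (Int.fract_lt_one _).le⟩
  · exact ⟨Int.fract_nonneg _, (Int.fract_lt_one _).le⟩
  · have e := periodic_int_mul h2 ⌊y⌋ ((Int.fract x : ℝ) + (Int.fract y : ℝ) * τ)
    have e' := periodic_int_mul h1 ⌊x⌋ ((Int.fract x : ℝ) + (Int.fract y : ℝ) * τ + ⌊y⌋ * τ)
    change F _ = F t
    rw [← e, ← e', ht]
    congr 1
    have hx : ((Int.fract x : ℝ) : ℂ) + ⌊x⌋ = x := by exact_mod_cast Int.fract_add_floor x
    have hy : ((Int.fract y : ℝ) : ℂ) + ⌊y⌋ = y := by exact_mod_cast Int.fract_add_floor y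
    linear_combination hx + τ * hy

/-- An entire function that is `1`-periodic and changes by a constant under `t ↦ t + τ` is
`τ`-periodic: its derivative is elliptic, so the function is affine, hence constant. -/
lemma shift_const_eq_zero {τ c : ℂ} (hτ : 0 < τ.im) {F : ℂ → ℂ} (hF : Differentiable ℂ F)
    (h1 : ∀ t, F (t + 1) = F t) (h2 : ∀ t, F (t + τ) = F t + c) : c = 0 := by
  have d1 : ∀ t, deriv F (t + 1) = deriv F t := fun t => by
    rw [← deriv_comp_add_const, funext h1]
  have d2 : ∀ t, deriv F (t + τ) = deriv F t := fun t => by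
    rw [← deriv_comp_add_const, funext h2, deriv_add_const]
  have hd : ∀ t, deriv F t = deriv F 0 := fun t =>
    apply_eq_of_periodic hτ hF.deriv d1 d2 t 0
  have haff : ∀ t, F t = F 0 + deriv F 0 * t := by
    have hG : Differentiable ℂ fun t => F t - deriv F 0 * t := by fun_prop
    have := is_const_of_deriv_eq_zero hG (fun t => by
      refine ((hF t).hasDerivAt.sub ((hasDerivAt_id t).const_mul (deriv F 0))).deriv.trans ?_
      rw [hd t]; ring)
    intro t
    linear_combination this t 0
  have e1 := h1 0
  have e2 := h2 0
  rw [zero_add, haff 1] at e1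
  rw [zero_add, haff τ] at e2
  linear_combination τ * e1 - e2

/-! ### Residues of elliptic functions -/

/-- The logarithmic derivative `θ'/θ`. -/
noncomputable def thLog (τ : ℂ) : ℂ → ℂ := logDeriv (th τ)

lemma analyticAt_thLog {τ p : ℂ} (hτ : 0 < τ.im) (hp : th τ p ≠ 0) :
    AnalyticAt ℂ (thLog τ) p := by
  have h := (th_differentiable hτ).analyticAt p
  exact h.deriv.div h hp

lemma eventually_th_ne_zero {τ : ℂ} (hτ : 0 < τ.im) (p : ℂ) : ∀ᶠ t in 𝓝[≠] p, th τ t ≠ 0 := by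
  have hD := th_differentiable hτ
  refine (hD.analyticAt p).eventually_eq_zero_or_eventually_ne_zero.resolve_left fun h => ?_
  have h0 : Set.EqOn (th τ) 0 Set.univ := AnalyticOnNhd.eqOn_zero_of_preconnected_of_eventuallyEq_zero
    (fun q _ => hD.analyticAt q) isPreconnected_univ (Set.mem_univ p) h
  refine thd_ne_zero hτ ?_
  rw [thd_eq_deriv, show th τ = fun _ => 0 from funext fun t => h0 (Set.mem_univ t)]
  simp

lemma thLog_add_one (τ t : ℂ) : thLog τ (t + 1) = thLog τ t := by
  have : deriv (th τ) (t + 1) = -deriv (th τ) t := by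
    rw [← deriv_comp_add_const, funext (th_add_one τ), deriv.fun_neg]
  simp [thLog, logDeriv_apply, this, th_add_one]

lemma thLog_add_tau {τ : ℂ} (hτ : 0 < τ.im) {t : ℂ} (ht : th τ t ≠ 0) :
    thLog τ (t + τ) = thLog τ t - 2 * Real.pi * I := by
  have hD := th_differentiable hτ
  have he : HasDerivAt (fun s : ℂ => -exp (-(Real.pi * I * τ)) * exp (-(2 * Real.pi * I * s)))
      (-exp (-(Real.pi * I * τ)) * (exp (-(2 * Real.pi * I * t)) * -(2 * Real.pi * I))) t := by
    have := (((hasDerivAt_id t).const_mul (2 * Real.pi * I : ℂ)).neg.cexp).const_mul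
      (-exp (-(Real.pi * I * τ)))
    simpa using this
  have hm := (he.fun_mul (hD t).hasDerivAt).deriv
  rw [← funext (th_add_tau hτ), deriv_comp_add_const] at hm
  rw [thLog, logDeriv_apply, logDeriv_apply, hm, th_add_tau hτ]
  have h1 := Complex.exp_ne_zero (-(Real.pi * I * τ))
  have h2 := Complex.exp_ne_zero (-(2 * Real.pi * I * t))
  field_simp
  ring

/-- The quotient `θ(t)/t`, extended by `θ'(0)` at the origin. -/
noncomputable def thQuot (τ : ℂ) : ℂ → ℂ := dslope (th τ) 0

lemma th_eq_mul_thQuot (τ t : ℂ) : th τ t = t * thQuot τ t := by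
  have := sub_smul_dslope_of_zero (th_zero τ) t
  rw [smul_eq_mul, sub_zero] at this
  exact this.symm

lemma thQuot_zero (τ : ℂ) : thQuot τ 0 = thd τ := dslope_same _ _

lemma analyticAt_dslope {f : ℂ → ℂ} {p : ℂ} (hf : AnalyticAt ℂ f p) :
    AnalyticAt ℂ (dslope f p) p := by
  obtain ⟨P, hP⟩ := hf
  exact ⟨_, hP.has_fpower_series_dslope_fslope⟩

lemma analyticAt_thQuot {τ : ℂ} (hτ : 0 < τ.im) : AnalyticAt ℂ (thQuot τ) 0 :=
  analyticAt_dslope ((th_differentiable hτ).analyticAt 0)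

/-- `θ'/θ` has a simple pole of residue `1` at the origin; the second and third formulas follow by
differentiation. -/
lemma thLog_expansion {τ : ℂ} (hτ : 0 < τ.im) : ∃ A : ℂ → ℂ, AnalyticAt ℂ A 0 ∧
    (thLog τ =ᶠ[𝓝[≠] 0] fun t => t⁻¹ + A t) ∧
    (deriv (thLog τ) =ᶠ[𝓝[≠] 0] fun t => -(t ^ 2)⁻¹ + deriv A t) ∧
    (deriv (deriv (thLog τ)) =ᶠ[𝓝[≠] 0] fun t => 2 * (t ^ 3)⁻¹ + deriv (deriv A) t) := by
  have hu := analyticAt_thQuot hτ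
  have hu0 : thQuot τ 0 ≠ 0 := by rw [thQuot_zero]; exact thd_ne_zero hτ
  have hA : AnalyticAt ℂ (logDeriv (thQuot τ)) 0 := hu.deriv.div hu hu0
  have h1 : thLog τ =ᶠ[𝓝[≠] 0] fun t => t⁻¹ + logDeriv (thQuot τ) t := by
    filter_upwards [self_mem_nhdsWithin,
      eventually_nhdsWithin_of_eventually_nhds hu.eventually_analyticAt,
      eventually_nhdsWithin_of_eventually_nhds (hu.continuousAt.eventually_ne hu0)] with t ht hut h0
    have ht0 : t ≠ 0 := ht
    have hmul := logDeriv_mul (f := fun s : ℂ => s) (g := thQuot τ) t ht0 h0 differentiableAt_id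
      hut.differentiableAt
    rw [thLog, show th τ = fun t => t * thQuot τ t from funext (th_eq_mul_thQuot τ)]
    refine hmul.trans ?_
    simp [logDeriv_apply]
  have h2 : deriv (thLog τ) =ᶠ[𝓝[≠] 0] fun t => -(t ^ 2)⁻¹ + deriv (logDeriv (thQuot τ)) t := by
    filter_upwards [h1.nhdsNE_deriv, self_mem_nhdsWithin,
      eventually_nhdsWithin_of_eventually_nhds hA.eventually_analyticAt] with t h ht hAt
    have ht0 : t ≠ 0 := ht
    rw [h]
    exact ((hasDerivAt_inv ht0).add hAt.differentiableAt.hasDerivAt).deriv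
  refine ⟨_, hA, h1, h2, ?_⟩
  filter_upwards [h2.nhdsNE_deriv, self_mem_nhdsWithin,
    eventually_nhdsWithin_of_eventually_nhds hA.deriv.eventually_analyticAt] with t h ht hAt
  have ht0 : t ≠ 0 := ht
  rw [h]
  have hp : HasDerivAt (fun t : ℂ => -(t ^ 2)⁻¹) (2 * (t ^ 3)⁻¹) t := by
    have := ((hasDerivAt_pow 2 t).fun_inv (pow_ne_zero 2 ht0)).fun_neg
    convert! this using 1
    simp; field_simp
  exact (hp.add hAt.differentiableAt.hasDerivAt).deriv

lemma deriv_shift_of_eventually {f : ℂ → ℂ} {w c : ℂ} {p : ℂ}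
    (hf : ∀ᶠ t in 𝓝[≠] p, f (t + w) = f t + c) :
    ∀ᶠ t in 𝓝[≠] p, deriv f (t + w) = deriv f t := by
  have h : (fun t => f (t + w)) =ᶠ[𝓝[≠] p] fun t => f t + c := hf
  filter_upwards [h.nhdsNE_deriv] with t ht
  rwa [deriv_comp_add_const, deriv_add_const] at ht

/-- Second order Taylor expansion with analytic remainder. -/
lemma exists_taylor_two {N : ℂ → ℂ} (hN : AnalyticAt ℂ N 0) : ∃ (a b c : ℂ) (h : ℂ → ℂ),
    AnalyticAt ℂ h 0 ∧ ∀ t, N t = a + b * t + c * t ^ 2 + t ^ 3 * h t := by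
  have step : ∀ (f : ℂ → ℂ) (t : ℂ), f t = f 0 + t * dslope f 0 t := fun f t => by
    have := sub_smul_dslope f 0 t
    rw [smul_eq_mul, sub_zero] at this
    rw [this]; ring
  have h1 := analyticAt_dslope hN
  have h2 := analyticAt_dslope h1
  refine ⟨N 0, dslope N 0 0, dslope (dslope N 0) 0 0, _, analyticAt_dslope h2, fun t => ?_⟩
  linear_combination step N t + t * step (dslope N 0) t + t ^ 2 * step (dslope (dslope N 0) 0) t

/-- The residue theorem for an elliptic function `G` with a pole of order at most three at `0`, a
pole of order at most one at `z`, and no other poles modulo the lattice: the residues `c` and `M z`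
add up to zero. Subtracting the principal parts by means of `θ'/θ` and its derivatives leaves a
function without poles which changes by `2πi(c + M z)` under `t ↦ t + τ`. -/
lemma residue_add_residue_eq_zero {τ z : ℂ} (hτ : 0 < τ.im) (hz : ¬ inLat τ z)
    {G M h : ℂ → ℂ} {a b c : ℂ}
    (hG1 : ∀ t, G (t + 1) = G t) (hGτ : ∀ t, G (t + τ) = G t)
    (hGan : ∀ p, th τ p ≠ 0 → th τ (p - z) ≠ 0 → AnalyticAt ℂ G p)
    (hh : AnalyticAt ℂ h 0)
    (hG0 : ∀ᶠ t in 𝓝[≠] 0, G t = (a + b * t + c * t ^ 2 + t ^ 3 * h t) / t ^ 3)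
    (hM : AnalyticAt ℂ M z) (hGz : ∀ᶠ t in 𝓝[≠] z, G t = M t / (t - z)) :
    c + M z = 0 := by
  let H : ℂ → ℂ := fun t => G t - c * thLog τ t + b * deriv (thLog τ) t
    - a / 2 * deriv (deriv (thLog τ)) t - M z * thLog τ (t - z)
  have hthz := th_ne_zero hτ hz
  have hthz' : th τ (0 - z) ≠ 0 := by rw [zero_sub, th_neg]; exact neg_ne_zero.mpr hthz
  -- quasi-periodicity of `H`
  have L1 : ∀ p, ∀ᶠ t in 𝓝[≠] p, thLog τ (t + 1) = thLog τ t + 0 := fun p =>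
    .of_forall fun t => by rw [thLog_add_one, add_zero]
  have Lτ : ∀ p, ∀ᶠ t in 𝓝[≠] p, thLog τ (t + τ) = thLog τ t + -(2 * Real.pi * I) := fun p => by
    filter_upwards [eventually_th_ne_zero hτ p] with t ht
    rw [thLog_add_tau hτ ht]; ring
  have D1 := fun p => deriv_shift_of_eventually (L1 p)
  have Dτ := fun p => deriv_shift_of_eventually (Lτ p)
  have DD1 := fun p => deriv_shift_of_eventually (c := 0) ((D1 p).mono fun t ht => by simpa using ht)
  have DDτ := fun p => deriv_shift_of_eventually (c := 0) ((Dτ p).mono fun t ht => by simpa using ht)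
  have H1 : ∀ p, ∀ᶠ t in 𝓝[≠] p, H (t + 1) = H t + 0 := fun p => by
    filter_upwards [L1 p, D1 p, DD1 p, (tendsto_add_nhdsNE p (-z)).eventually (L1 (p + -z))]
      with t h1 h2 h3 h4
    simp only [H, h1, h2, h3, hG1]
    rw [show t + 1 - z = t + -z + 1 by ring, h4]
    ring_nf
  have Hτ : ∀ p, ∀ᶠ t in 𝓝[≠] p, H (t + τ) = H t + 2 * Real.pi * I * (c + M z) := fun p => by
    filter_upwards [Lτ p, Dτ p, DDτ p, (tendsto_add_nhdsNE p (-z)).eventually (Lτ (p + -z))]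
      with t h1 h2 h3 h4
    simp only [H, h1, h2, h3, hGτ]
    rw [show t + τ - z = t + -z + τ by ring, h4]
    ring_nf
  -- removability at the origin
  have R0 : RemovableAt H 0 := by
    obtain ⟨A, hA, e1, e2, e3⟩ := thLog_expansion hτ
    refine ⟨fun t => h t - c * A t + b * deriv A t - a / 2 * deriv (deriv A) t
      - M z * thLog τ (t - z), ?_, ?_⟩
    · have hZ : AnalyticAt ℂ (fun t => thLog τ (t - z)) 0 :=
        AnalyticAt.fun_comp_of_eq (analyticAt_thLog hτ hthz') (by fun_prop) rfl
      have hA1 := hA.deriv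
      have hA2 := hA1.deriv
      fun_prop
    · filter_upwards [e1, e2, e3, hG0, self_mem_nhdsWithin] with t h1 h2 h3 h4 ht
      have ht0 : t ≠ 0 := ht
      simp only [H, h1, h2, h3, h4]
      field_simp
      ring
  -- removability at `z`
  have Rz : RemovableAt H z := by
    obtain ⟨A, hA, e1, -⟩ := thLog_expansion hτ
    have hL := analyticAt_thLog hτ hthz
    refine ⟨fun t => dslope M z t - M z * A (t - z) - c * thLog τ t + b * deriv (thLog τ) t
      - a / 2 * deriv (deriv (thLog τ)) t, ?_, ?_⟩
    · have hZ : AnalyticAt ℂ (fun t => A (t - z)) z :=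
        AnalyticAt.fun_comp_of_eq hA (by fun_prop) (sub_self z)
      have hd := analyticAt_dslope hM
      have hL1 := hL.deriv
      have hL2 := hL1.deriv
      have hMz : AnalyticAt ℂ (fun _ : ℂ => M z) z := analyticAt_const
      exact (((hd.sub (hMz.mul hZ)).sub (analyticAt_const.mul hL)).add
        (analyticAt_const.mul hL1)).sub (analyticAt_const.mul hL2)
    · have e1' := (tendsto_add_nhdsNE z (-z)).eventually (by rw [add_neg_cancel]; exact e1)
      filter_upwards [e1', hGz, self_mem_nhdsWithin] with t h1 h2 ht
      have ht0 : t - z ≠ 0 := sub_ne_zero.mpr ht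
      have hs := sub_smul_dslope M z t
      rw [smul_eq_mul] at hs
      have hs' : M t = M z + (t - z) * dslope M z t := by rw [hs]; ring
      rw [← sub_eq_add_neg] at h1
      simp only [H, h1, h2, hs']
      field_simp
      ring
  have R : ∀ p, RemovableAt H p := by
    have trans : ∀ p (m n : ℤ), RemovableAt H p → RemovableAt H (p + m + n * τ) :=
      fun p m n hp => by
        have := (hp.add_int_mul H1 m).add_int_mul Hτ n
        simpa using this
    intro p
    by_cases h1 : inLat τ p
    · obtain ⟨m, n, rfl⟩ := h1
      simpa using trans 0 m n R0
    by_cases h2 : inLat τ (p - z)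
    · obtain ⟨m, n, h2⟩ := h2
      have : p = z + m + n * τ := by linear_combination h2
      rw [this]
      exact trans z m n Rz
    have t1 := th_ne_zero hτ h1
    have t2 := th_ne_zero hτ h2
    have hG := hGan p t1 t2
    have hL := analyticAt_thLog hτ t1
    have hL1 := hL.deriv
    have hL2 := hL1.deriv
    have hZ : AnalyticAt ℂ (fun t => thLog τ (t - z)) p :=
      AnalyticAt.fun_comp_of_eq (analyticAt_thLog hτ t2) (by fun_prop) rfl
    exact AnalyticAt.removableAt (by fun_prop)
  obtain ⟨F, hF, hHF⟩ := exists_entire_extension R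
  have F1 := fun t => (shift_of_eventually_shift hF hHF H1 t).trans (add_zero _)
  have Fτ := shift_of_eventually_shift hF hHF Hτ
  exact (mul_eq_zero.mp (shift_const_eq_zero hτ hF F1 Fτ)).resolve_left Complex.two_pi_I_ne_zero

/-- The circle integral of a Laurent expansion with a pole of order at most three. -/
lemma circleIntegral_laurent {f h : ℂ → ℂ} {a b c : ℂ} (hh : AnalyticAt ℂ h 0)
    (hf : ∀ᶠ t in 𝓝[≠] 0, f t = (a + b * t + c * t ^ 2 + t ^ 3 * h t) / t ^ 3) :
    ∃ ε > 0, ∀ r : ℝ, 0 < r → r < ε → (∮ t in C(0, r), f t) = 2 * Real.pi * I * c := by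
  obtain ⟨ε, hε, hball⟩ := Metric.eventually_nhds_iff_ball.mp
    (hh.eventually_analyticAt.and (eventually_nhdsWithin_iff.mp hf))
  refine ⟨ε, hε, fun r hr hrε => ?_⟩
  have hsub : Metric.closedBall (0 : ℂ) r ⊆ Metric.ball 0 ε := Metric.closedBall_subset_ball hrε
  have hsph : ∀ t ∈ Metric.sphere (0 : ℂ) r, t ≠ 0 := fun t ht h0 => by
    simp [h0, hr.ne] at ht
  have hcont : ContinuousOn h (Metric.closedBall 0 r) := fun t ht =>
    (hball t (hsub ht)).1.continuousAt.continuousWithinAt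
  have I0 : (∮ t in C(0, r), h t) = 0 :=
    circleIntegral_eq_zero_of_differentiable_on_off_countable hr.le Set.countable_empty hcont
      fun t ht => (hball t (hsub (Metric.ball_subset_closedBall ht.1))).1.differentiableAt
  have I1 : (∮ t in C(0, r), (t - 0)⁻¹) = 2 * Real.pi * I :=
    circleIntegral.integral_sub_center_inv 0 hr.ne'
  have I2 : (∮ t in C(0, r), (t - 0) ^ (-2 : ℤ)) = 0 :=
    circleIntegral.integral_sub_zpow_of_ne (by norm_num) 0 0 r
  have I3 : (∮ t in C(0, r), (t - 0) ^ (-3 : ℤ)) = 0 :=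
    circleIntegral.integral_sub_zpow_of_ne (by norm_num) 0 0 r
  have c0 : CircleIntegrable h 0 r :=
    (hcont.mono Metric.sphere_subset_closedBall).circleIntegrable hr.le
  have ci : ∀ n : ℤ, CircleIntegrable (fun t : ℂ => (t - 0) ^ n) 0 r := fun n => by
    refine circleIntegrable_sub_zpow_iff.mpr (Or.inr (Or.inr fun h0 => ?_))
    exact hsph 0 (by rwa [abs_of_pos hr] at h0) rfl
  have c1 : CircleIntegrable (fun t : ℂ => (t - 0)⁻¹) 0 r := by simpa using ci (-1)
  have e : Set.EqOn f (fun t => a * (t - 0) ^ (-3 : ℤ) + b * (t - 0) ^ (-2 : ℤ)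
      + c * (t - 0)⁻¹ + h t) (Metric.sphere 0 r) := fun t ht => by
    have ht0 := hsph t ht
    rw [(hball t (hsub (Metric.sphere_subset_closedBall ht))).2 ht0]
    simp only [sub_zero]
    field_simp
  have a3 : CircleIntegrable (fun t : ℂ => a * (t - 0) ^ (-3 : ℤ)) 0 r :=
    (ci (-3)).const_smul (a := a)
  have a2 : CircleIntegrable (fun t : ℂ => b * (t - 0) ^ (-2 : ℤ)) 0 r :=
    (ci (-2)).const_smul (a := b)
  have a1 : CircleIntegrable (fun t : ℂ => c * (t - 0)⁻¹) 0 r := c1.const_smul (a := c)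
  have a32 : CircleIntegrable
      (fun t : ℂ => a * (t - 0) ^ (-3 : ℤ) + b * (t - 0) ^ (-2 : ℤ)) 0 r := a3.add a2
  have a321 : CircleIntegrable
      (fun t : ℂ => a * (t - 0) ^ (-3 : ℤ) + b * (t - 0) ^ (-2 : ℤ) + c * (t - 0)⁻¹) 0 r :=
    a32.add a1
  rw [circleIntegral.integral_congr hr.le e, circleIntegral.integral_add a321 c0,
    circleIntegral.integral_add a32 a1, circleIntegral.integral_add a3 a2,
    circleIntegral.integral_const_mul, circleIntegral.integral_const_mul,
    circleIntegral.integral_const_mul, I0, I1, I2, I3]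
  ring

/-! ### The function `F₂` -/

/-- The elliptic function obtained from `F₂` by cancelling common theta factors, with `w` in place
of `(a + 1) z`. -/
noncomputable def redF (τ z w t : ℂ) : ℂ :=
  -(thd τ ^ 3 / (th τ (2 * z) * th τ w ^ 2)) *
    ((th τ (t + z) * th τ (t - 2 * z) * th τ (t + w) * th τ (t - w)) /
      (th τ t ^ 3 * th τ (t - z)))

lemma F₂_eq_redF {τ z a t : ℂ} (hz : th τ z ≠ 0) (h1 : th τ (t + z) ≠ 0)
    (h2 : th τ (t - z) ≠ 0) : F₂ τ z a t = redF τ z ((a + 1) * z) t := by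
  have e1 : th τ (-t + 2 * z) = -th τ (t - 2 * z) := by rw [← th_neg]; ring_nf
  have e2 : th τ (-t + z) = -th τ (t - z) := by rw [← th_neg]; ring_nf
  rw [F₂, redF, e1, e2, th_neg]
  field_simp

lemma redF_add_one (τ z w t : ℂ) : redF τ z w (t + 1) = redF τ z w t := by
  have e : ∀ s, th τ (t + 1 + s) = -th τ (t + s) := fun s => by
    rw [← th_add_one]; ring_nf
  have e' : ∀ s, th τ (t + 1 - s) = -th τ (t - s) := fun s => by
    rw [← th_add_one]; ring_nf
  simp only [redF, e, e', th_add_one]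
  ring_nf

/-- The zeros `-z, 2z, -w, w` and the poles `0, 0, 0, z` have the same sum, so the
factors of automorphy cancel. -/
lemma redF_add_tau {τ : ℂ} (hτ : 0 < τ.im) (z w t : ℂ) : redF τ z w (t + τ) = redF τ z w t := by
  let X : ℂ → ℂ := fun s => -exp (-(Real.pi * I * τ)) * exp (-(2 * Real.pi * I * (t + s)))
  have hX : ∀ s, X s ≠ 0 := fun s =>
    mul_ne_zero (neg_ne_zero.mpr (Complex.exp_ne_zero _)) (Complex.exp_ne_zero _)
  have e : ∀ s, th τ (t + τ + s) = X s * th τ (t + s) := fun s => by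
    rw [← th_add_tau hτ]; ring_nf
  have hXX : X z * X (-(2 * z)) * X w * X (-w) = X 0 ^ 3 * X (-z) := by
    have : exp (-(2 * Real.pi * I * (t + z))) * exp (-(2 * Real.pi * I * (t + -(2 * z)))) *
        exp (-(2 * Real.pi * I * (t + w))) * exp (-(2 * Real.pi * I * (t + -w))) =
        exp (-(2 * Real.pi * I * (t + 0))) ^ 3 * exp (-(2 * Real.pi * I * (t + -z))) := by
      rw [← Complex.exp_nat_mul, ← Complex.exp_add, ← Complex.exp_add, ← Complex.exp_add,
        ← Complex.exp_add]
      congr 1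
      push_cast
      ring
    simp only [X]
    linear_combination exp (-(Real.pi * I * τ)) ^ 4 * this
  have e0 := e 0
  simp only [add_zero] at e0
  simp only [redF, sub_eq_add_neg, e, e0]
  congr 1
  refine Eq.trans ?_ (mul_div_mul_left _ _ (mul_ne_zero (pow_ne_zero 3 (hX 0)) (hX (-z))))
  congr 1
  · rw [← hXX]; ring
  · ring

/-- The residue of `F₂` at `t = 0`, computed as `(1/2πi)` times the integral over a small
positively oriented circle around `0`, equals `θ((a+2)z)θ(az)/θ((a+1)z)²·(θ'(0)/θ(z))²`. -/
theorem F₂_residue_at_zero (τ z a : ℂ) (hτ : 0 < τ.im)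
    (hz : ¬ inLat τ z) (h2z : ¬ inLat τ (2 * z)) (haz : ¬ inLat τ ((a + 1) * z)) :
    ∃ ε > 0, ∀ r : ℝ, 0 < r → r < ε →
      (2 * Real.pi * I : ℂ)⁻¹ * (∮ t in C(0, r), F₂ τ z a t) =
        th τ ((a + 2) * z) * th τ (a * z) / (th τ ((a + 1) * z)) ^ 2 *
          (thd τ / th τ z) ^ 2 := by
  have hD := th_differentiable hτ
  have an : ∀ p s, AnalyticAt ℂ (fun t => th τ (t + s)) p := fun p s =>
    (hD.comp (differentiable_id.add_const s)).analyticAt p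
  have an' : ∀ p s, AnalyticAt ℂ (fun t => th τ (t - s)) p := fun p s =>
    (hD.comp (differentiable_id.sub_const s)).analyticAt p
  have an0 : ∀ p, AnalyticAt ℂ (th τ) p := fun p => hD.analyticAt p
  have t1 := th_ne_zero hτ hz
  have t2 := th_ne_zero hτ h2z
  have t3 := th_ne_zero hτ haz
  have t4 := thd_ne_zero hτ
  set w := (a + 1) * z with hw
  set K := thd τ ^ 3 / (th τ (2 * z) * th τ w ^ 2) with hK
  have hu := analyticAt_thQuot hτ
  have hthz' : th τ (0 - z) ≠ 0 := by rw [zero_sub, th_neg]; exact neg_ne_zero.mpr t1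
  -- `redF` near the origin
  have hN : AnalyticAt ℂ (fun t => -K *
      ((th τ (t + z) * th τ (t - 2 * z) * th τ (t + w) * th τ (t - w)) /
      (thQuot τ t ^ 3 * th τ (t - z)))) 0 := by
    refine analyticAt_const.mul (AnalyticAt.fun_div
      ((((an 0 z).fun_mul (an' 0 _)).fun_mul (an 0 w)).fun_mul (an' 0 w))
      ((hu.fun_pow 3).fun_mul (an' 0 z)) ?_)
    rw [thQuot_zero]
    exact mul_ne_zero (pow_ne_zero 3 t4) hthz'
  obtain ⟨α, β, γ, h, hh, hNexp⟩ := exists_taylor_two hN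
  have hG0 : ∀ᶠ t in 𝓝[≠] 0,
      redF τ z w t = (α + β * t + γ * t ^ 2 + t ^ 3 * h t) / t ^ 3 := by
    filter_upwards with t
    rw [← hNexp t, redF, th_eq_mul_thQuot τ t, ← hK, mul_pow]
    simp only [div_eq_mul_inv, mul_inv]
    ring
  -- `redF` near `z`
  have hM : AnalyticAt ℂ (fun t => -K *
      ((th τ (t + z) * th τ (t - 2 * z) * th τ (t + w) * th τ (t - w)) /
      (th τ t ^ 3 * thQuot τ (t - z)))) z := by
    have huz : AnalyticAt ℂ (fun t => thQuot τ (t - z)) z :=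
      AnalyticAt.fun_comp_of_eq hu (by fun_prop) (sub_self z)
    refine analyticAt_const.mul (AnalyticAt.fun_div
      ((((an z z).fun_mul (an' z _)).fun_mul (an z w)).fun_mul (an' z w))
      (((an0 z).fun_pow 3).fun_mul huz) ?_)
    rw [sub_self, thQuot_zero]
    exact mul_ne_zero (pow_ne_zero 3 t1) t4
  have hres := residue_add_residue_eq_zero hτ hz (redF_add_one τ z w) (redF_add_tau hτ z w)
    (fun p h1 h2 => by
      refine analyticAt_const.mul (AnalyticAt.fun_div
        ((((an p z).fun_mul (an' p _)).fun_mul (an p w)).fun_mul (an' p w))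
        (((an0 p).fun_pow 3).fun_mul (an' p z)) ?_)
      exact mul_ne_zero (pow_ne_zero 3 h1) h2) hh hG0 hM
    (by
      filter_upwards with t
      rw [redF, th_eq_mul_thQuot τ (t - z), ← hK]
      simp only [div_eq_mul_inv, mul_inv]
      ring)
  have hF : ∀ᶠ t in 𝓝[≠] 0, F₂ τ z a t = (α + β * t + γ * t ^ 2 + t ^ 3 * h t) / t ^ 3 := by
    have n1 : ∀ᶠ t in 𝓝 (0 : ℂ), th τ (t + z) ≠ 0 :=
      (an 0 z).continuousAt.eventually_ne (by simpa using t1)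
    have n2 : ∀ᶠ t in 𝓝 (0 : ℂ), th τ (t - z) ≠ 0 :=
      (an' 0 z).continuousAt.eventually_ne hthz'
    filter_upwards [hG0, eventually_nhdsWithin_of_eventually_nhds n1,
      eventually_nhdsWithin_of_eventually_nhds n2] with t h0 h1 h2
    rw [F₂_eq_redF t1 h1 h2, ← hw, h0]
  obtain ⟨ε, hε, hint⟩ := circleIntegral_laurent hh hF
  refine ⟨ε, hε, fun r hr hrε => ?_⟩
  rw [hint r hr hrε, inv_mul_cancel_left₀ Complex.two_pi_I_ne_zero]
  have e1 : th τ (z + z) = th τ (2 * z) := by ring_nf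
  have e2 : th τ (z - 2 * z) = -th τ z := by rw [← th_neg]; ring_nf
  have e3 : th τ (z + w) = th τ ((a + 2) * z) := by rw [hw]; ring_nf
  have e4 : th τ (z - w) = -th τ (a * z) := by rw [← th_neg, hw]; ring_nf
  rw [sub_self, thQuot_zero, e1, e2, e3, e4] at hres
  rw [eq_neg_of_add_eq_zero_left hres, hK]
  field_simp
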